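/- If two-variable first-order formulas φ(x₀) and ψ(x₀) are jointly FO²(τ)-consistent, then there are pointed models (𝔅₁, b₁) ⊨ φ and (𝔅₂, b₂) ⊨ ψ with (𝔅₁, b₁) ∼_{FO²,τ} (𝔅₂, b₂) whose domains have size at most double exponential in the combined size of φ and ψ. -/

import Mathlib

/-- A relational signature: relation symbols with arities, no function or
constant symbols. -/
structure Sig : Type 1 where
  Rel : Type
  arity : Rel → ℕ

/-- A relational structure for a signature. -/
structure Str (σ : Sig) : Type 1 where
  dom : Type
  interp : (R : σ.Rel) → (Fin (σ.arity R) → dom) → Prop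

/-- Update an assignment on all variables occurring in the list `ys`. -/
def updOn {D : Type} (v : ℕ → D) (ys : List ℕ) (w : ℕ → D) : ℕ → D :=
  fun n => if n ∈ ys then w n else v n

/-- `a ↦ b` is a partial `τ`-isomorphism between the tuples `a` (in `A`) and
`b` (in `B`). -/
def PartialIso {σ : Sig} (τ : Set σ.Rel) (A B : Str σ) {n : ℕ}
    (a : Fin n → A.dom) (b : Fin n → B.dom) : Prop :=
  (∀ i j : Fin n, a i = a j ↔ b i = b j) ∧
  ∀ R ∈ τ, ∀ t : Fin (σ.arity R) → Fin n, A.interp R (a ∘ t) ↔ B.interp R (b ∘ t)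

/-- Syntax of first-order formulas over named variables (relational
signature). -/
inductive Fml (σ : Sig) : Type
  | eq : ℕ → ℕ → Fml σ
  | rel : (R : σ.Rel) → (Fin (σ.arity R) → ℕ) → Fml σ
  | not : Fml σ → Fml σ
  | and : Fml σ → Fml σ → Fml σ
  | or : Fml σ → Fml σ → Fml σ
  | ex : ℕ → Fml σ → Fml σ
  | all : ℕ → Fml σ → Fml σ

namespace Fml

def Sat {σ : Sig} (A : Str σ) : Fml σ → (ℕ → A.dom) → Prop
  | .eq i j, v => v i = v j
  | .rel R t, v => A.interp R (fun k => v (t k))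
  | .not φ, v => ¬ Sat A φ v
  | .and φ ψ, v => Sat A φ v ∧ Sat A ψ v
  | .or φ ψ, v => Sat A φ v ∨ Sat A ψ v
  | .ex x φ, v => ∃ d, Sat A φ (Function.update v x d)
  | .all x φ, v => ∀ d, Sat A φ (Function.update v x d)

/-- Free variables. -/
def fv {σ : Sig} : Fml σ → Finset ℕ
  | .eq i j => {i, j}
  | .rel _ t => Finset.image t Finset.univ
  | .not φ => fv φ
  | .and φ ψ => fv φ ∪ fv ψ
  | .or φ ψ => fv φ ∪ fv ψ
  | .ex x φ => (fv φ).erase x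
  | .all x φ => (fv φ).erase x

/-- All (free and bound) variables. -/
def allVars {σ : Sig} : Fml σ → Finset ℕ
  | .eq i j => {i, j}
  | .rel _ t => Finset.image t Finset.univ
  | .not φ => allVars φ
  | .and φ ψ => allVars φ ∪ allVars ψ
  | .or φ ψ => allVars φ ∪ allVars ψ
  | .ex x φ => insert x (allVars φ)
  | .all x φ => insert x (allVars φ)

/-- The signature of a formula. -/
def sig {σ : Sig} : Fml σ → Set σ.Rel
  | .eq _ _ => ∅
  | .rel R _ => {R}
  | .not φ => sig φ
  | .and φ ψ => sig φ ∪ sig ψ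
  | .or φ ψ => sig φ ∪ sig ψ
  | .ex _ φ => sig φ
  | .all _ φ => sig φ

/-- Size of a formula. -/
def size {σ : Sig} : Fml σ → ℕ
  | .eq _ _ => 1
  | .rel R _ => 1 + σ.arity R
  | .not φ => size φ + 1
  | .and φ ψ => size φ + size ψ + 1
  | .or φ ψ => size φ + size ψ + 1
  | .ex _ φ => size φ + 1
  | .all _ φ => size φ + 1

/-- Quantifier-free formulas. -/
def QFree {σ : Sig} : Fml σ → Prop
  | .eq _ _ => True
  | .rel _ _ => True
  | .not φ => QFree φ
  | .and φ ψ => QFree φ ∧ QFree ψ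
  | .or φ ψ => QFree φ ∧ QFree ψ
  | .ex _ _ => False
  | .all _ _ => False

end Fml

/-- A two-variable formula: it uses only the two variables `0` ("x") and
`1` ("y"). -/
def IsFO2 {σ : Sig} (φ : Fml σ) : Prop := φ.allVars ⊆ {0, 1}

/-- The pointed structure `(A, a)` satisfies `φ` (the tuple `a` is assigned to
the variables `0, …, n-1`). -/
def SatTupleF {σ : Sig} (A : Str σ) (φ : Fml σ) {n : ℕ} (a : Fin n → A.dom) : Prop :=
  ∀ v : ℕ → A.dom, (∀ i : Fin n, v i = a i) → φ.Sat A v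

/-- Semantic entailment. -/
def FOEnt {σ : Sig} (φ ψ : Fml σ) : Prop :=
  ∀ (A : Str σ) (v : ℕ → A.dom), φ.Sat A v → ψ.Sat A v

/-- `S` is an FO²(τ)-bisimulation between `A` and `B`. -/
def FO2Bisim {σ : Sig} (τ : Set σ.Rel) (A B : Str σ) (S : Set (A.dom × B.dom)) : Prop :=
  (∀ a : A.dom, ∃ b, (a, b) ∈ S) ∧ (∀ b : B.dom, ∃ a, (a, b) ∈ S) ∧
  ∀ p ∈ S,
    (∀ a' : A.dom, ∃ b' : B.dom,
      PartialIso τ A B ![p.1, a'] ![p.2, b'] ∧ (a', b') ∈ S) ∧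
    (∀ b' : B.dom, ∃ a' : A.dom,
      PartialIso τ A B ![p.1, a'] ![p.2, b'] ∧ (a', b') ∈ S)

/-- `(A, a) ∼_{FO²,τ} (B, b)` for tuples of equal length. -/
def FO2Bisimilar {σ : Sig} (τ : Set σ.Rel) (A B : Str σ) {n : ℕ}
    (a : Fin n → A.dom) (b : Fin n → B.dom) : Prop :=
  PartialIso τ A B a b ∧ ∃ S, FO2Bisim τ A B S ∧ ∀ i, (a i, b i) ∈ S

/-- `(A, a)` and `(B, b)` satisfy exactly the same FO²(τ)-formulas. -/
def FO2Equiv {σ : Sig} (τ : Set σ.Rel) (A B : Str σ) {n : ℕ}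
    (a : Fin n → A.dom) (b : Fin n → B.dom) : Prop :=
  ∀ φ : Fml σ, IsFO2 φ → φ.sig ⊆ τ → φ.fv ⊆ Finset.range n →
    (SatTupleF A φ a ↔ SatTupleF B φ b)

/-- Joint FO²(τ)-consistency of two formulas with free variables among
`0, …, n-1`. -/
def JointFO2Con {σ : Sig} (τ : Set σ.Rel) (n : ℕ) (φ ψ : Fml σ) : Prop :=
  ∃ (A B : Str σ) (a : Fin n → A.dom) (b : Fin n → B.dom),
    SatTupleF A φ a ∧ SatTupleF B ψ b ∧ FO2Bisimilar τ A B a b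


open Classical in
theorem lemK {X Φ Req : Type} [Fintype Φ] [Fintype Req] [Nonempty Req]
    (tp : X → Φ) (w : X → Req → X) (x0 x1 : X) :
    ∃ (Y : Type) (_ : Fintype Y) (h : Y → Y → X) (Kg : Y → Prop),
      Fintype.card Y ≤ Fintype.card Φ +
        (Fintype.card Φ + Fintype.card Φ * Fintype.card Req + 2) * (3 * Fintype.card Req) ∧
      (∀ y y', h y y' = h y' y ↔ y = y') ∧
      (∀ y y', tp (h y y') = tp (h y y)) ∧
      (∀ x, (∀ x', tp x' = tp x → x' = x) → ∃ y, Kg y ∧ h y y = x) ∧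
      (∀ y', Kg y' → ∀ y, h y y' = h y y ∧ h y' y = h y' y') ∧
      (∀ y, ∃ f : Req → Y, ∀ r, ¬ (∀ x', tp x' = tp (w (h y y) r) → x' = w (h y y) r) →
        w (h y y) r ≠ h y y →
        h y (f r) = h y y ∧ h (f r) y = w (h y y) r ∧ ¬ Kg (f r) ∧
        ∀ s, ¬ (∀ x', tp x' = tp (w (h y y) s) → x' = w (h y y) s) →
          w (h y y) s ≠ h y y → f r = f s → r = s) ∧
      (∃ y0 y1, h y0 y1 = x0 ∧ h y1 y0 = x1) := by
  obtain ⟨king, hking⟩ : ∃ king : X → Prop, ∀ x, king x ↔ (∀ x', tp x' = tp x → x' = x) :=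
    ⟨_, fun _ => Iff.rfl⟩
  simp only [← hking]
  have : Nonempty X := ⟨x0⟩
  obtain ⟨sel, hsel⟩ : ∃ sel : Φ → X, ∀ x, tp (sel (tp x)) = tp x :=
    ⟨Function.invFun tp, fun x => Function.invFun_eq ⟨x, rfl⟩⟩
  let G : Φ ⊕ (Φ × Req) ⊕ Bool → X := fun z => match z with
    | .inl φ => sel φ
    | .inr (.inl (φ, r)) => w (sel φ) r
    | .inr (.inr b) => if b then x0 else x1
  have halt : ∀ x, ∃ x', ¬ king x → tp x' = tp x ∧ x' ≠ x := by
    intro x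
    by_cases hk : king x
    · exact ⟨x, fun h => absurd hk h⟩
    · rw [hking] at hk
      push Not at hk
      obtain ⟨x', h⟩ := hk
      exact ⟨x', fun _ => h⟩
  choose alt halt using halt
  let Kt := {x // king x}
  let Pt := {x // ¬ king x ∧ x ∈ Set.range G}
  have hKinj : Function.Injective (fun x : Kt => tp x.1) := by
    intro a b hab
    exact Subtype.ext (((hking b.1).1 b.2) a.1 hab)
  have : Finite Kt := Finite.of_injective _ hKinj
  have : Fintype Kt := Fintype.ofFinite _
  have hPinj : ∀ p : Pt, ∃ z, G z = p.1 := fun p => p.2.2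
  choose pz hpz using hPinj
  have hpzinj : Function.Injective pz := by
    intro a b hab
    apply Subtype.ext
    rw [← hpz a, ← hpz b, hab]
  have : Finite Pt := Finite.of_injective _ hpzinj
  have : Fintype Pt := Fintype.ofFinite _
  let V := Pt × Fin 3 × Req
  let edge : V → V → Prop := fun x y => y.2.1 = x.2.1 + 1 ∧ ¬ king (w x.1.1 y.2.2) ∧
    w x.1.1 y.2.2 ≠ x.1.1 ∧ y.1.1 = sel (tp (w x.1.1 y.2.2))
  let hh : V → V → X := fun x y => if x = y then x.1.1 else if edge x y then x.1.1 else
    if edge y x then w y.1.1 x.2.2 else if x.1.1 ≠ y.1.1 then x.1.1 else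
    if WellOrderingRel x y then x.1.1 else alt x.1.1
  have hedge : ∀ x y, edge x y → ¬ edge y x := by
    intro x y h1 h2
    have := h1.1
    rw [h2.1] at this
    revert this
    generalize y.2.1 = c
    revert c
    decide
  have hedge2 : ∀ x y, edge x y → x ≠ y := by
    intro x y h1 h2
    subst h2
    have := h1.1
    revert this
    generalize x.2.1 = c
    revert c
    decide
  have hhself : ∀ x, hh x x = x.1.1 := fun x => by simp [hh]
  have hhedge : ∀ x y, edge x y → hh x y = x.1.1 ∧ hh y x = w x.1.1 y.2.2 := by
    intro x y h
    have h1 := hedge _ _ h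
    have h2 := hedge2 _ _ h
    constructor
    · simp only [hh, if_neg h2, if_pos h]
    · simp only [hh, if_neg (Ne.symm h2), if_neg h1, if_pos h]
  have hhne : ∀ x y, ¬ edge x y → ¬ edge y x → x.1.1 ≠ y.1.1 → hh x y = x.1.1 := by
    intro x y h1 h2 h3
    have : x ≠ y := fun h => h3 (by rw [h])
    simp only [hh, if_neg this, if_neg h1, if_neg h2, if_pos h3]
  have hhalt : ∀ x y, ¬ edge x y → ¬ edge y x → x.1.1 = y.1.1 → x ≠ y →
      (hh x y = x.1.1 ∧ hh y x = alt x.1.1) ∨ (hh y x = x.1.1 ∧ hh x y = alt x.1.1) := by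
    intro x y h1 h2 h3 h4
    have key : ∀ x y : V, ¬ edge x y → ¬ edge y x → x.1.1 = y.1.1 → x ≠ y →
        WellOrderingRel x y → (hh x y = x.1.1 ∧ hh y x = alt x.1.1) := by
      intro x y h1 h2 h3 h4 h5
      have h6 : ¬ WellOrderingRel y x := fun h => asymm_of _ h5 h
      have h7 : ¬ (x.1.1 ≠ y.1.1) := by simpa using h3
      have h8 : ¬ (y.1.1 ≠ x.1.1) := by simpa using h3.symm
      constructor
      · simp only [hh, if_neg h4, if_neg h1, if_neg h2, if_neg h7, if_pos h5]
      · have : hh y x = alt y.1.1 := by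
          simp only [hh, if_neg (Ne.symm h4), if_neg h1, if_neg h2, if_neg h8, if_neg h6]
        rw [this, h3]
    rcases trichotomous_of (WellOrderingRel (α := V)) x y with h | h | h
    · exact Or.inl (key x y h1 h2 h3 h4 h)
    · exact absurd h h4
    · have := key y x h2 h1 h3.symm (Ne.symm h4) h
      right
      rw [h3]; exact this
  have hhtp : ∀ x y, tp (hh x y) = tp x.1.1 := by
    intro x y
    by_cases h0 : x = y
    · subst h0; rw [hhself]
    by_cases h1 : edge x y
    · rw [(hhedge _ _ h1).1]
    by_cases h2 : edge y x
    · rw [(hhedge _ _ h2).2, h2.2.2.2, hsel]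
    by_cases h3 : x.1.1 = y.1.1
    · rcases hhalt x y h1 h2 h3 h0 with h | h
      · rw [h.1]
      · rw [h.2, (halt _ x.1.2.1).1]
    · rw [hhne x y h1 h2 h3]
  have hhinj : ∀ x y, hh x y = hh y x → x = y := by
    intro x y hxy
    by_contra h0
    by_cases h1 : edge x y
    · rw [(hhedge _ _ h1).1, (hhedge _ _ h1).2] at hxy
      exact h1.2.2.1 hxy.symm
    by_cases h2 : edge y x
    · rw [(hhedge _ _ h2).1, (hhedge _ _ h2).2] at hxy
      exact h2.2.2.1 hxy
    by_cases h3 : x.1.1 = y.1.1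
    · have := (halt _ x.1.2.1).2
      rcases hhalt x y h1 h2 h3 h0 with h | h
      · rw [h.1, h.2] at hxy; exact this hxy.symm
      · rw [h.1, h.2] at hxy; exact this hxy
    · rw [hhne x y h1 h2 h3, hhne y x h2 h1 (Ne.symm h3)] at hxy
      exact h3 hxy
  let h : Kt ⊕ V → Kt ⊕ V → X := fun x y => match x, y with
    | .inl k, _ => k.1
    | .inr p, .inl _ => p.1.1
    | .inr p, .inr q => hh p q
  let Kg : Kt ⊕ V → Prop := fun x => match x with
    | .inl _ => True
    | .inr _ => False
  refine ⟨Kt ⊕ V, inferInstance, h, Kg, ?_, ?_, ?_, ?_, ?_, ?_, ?_⟩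
  · have c1 : Fintype.card Kt ≤ Fintype.card Φ := Fintype.card_le_of_injective _ hKinj
    have c2 : Fintype.card Pt ≤ Fintype.card (Φ ⊕ (Φ × Req) ⊕ Bool) :=
      Fintype.card_le_of_injective _ hpzinj
    simp only [Fintype.card_sum, Fintype.card_prod, Fintype.card_bool, Fintype.card_fin, V] at c2 ⊢
    have := Nat.mul_le_mul_right (3 * Fintype.card Req) c2
    rw [← add_assoc] at this
    exact Nat.add_le_add c1 this
  · intro y y'
    constructor
    · intro hy
      rcases y with k | p <;> rcases y' with k' | p'
      · exact congrArg _ (Subtype.ext hy)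
      · exact absurd (show king p'.1.1 from (show k.1 = p'.1.1 from hy) ▸ k.2) p'.1.2.1
      · exact absurd (show king p.1.1 from (show p.1.1 = k'.1 from hy) ▸ k'.2) p.1.2.1
      · exact congrArg _ (hhinj _ _ hy)
    · rintro rfl; rfl
  · intro y y'
    rcases y with k | p <;> rcases y' with k' | p'
    · rfl
    · rfl
    · show tp p.1.1 = tp (hh p p)
      rw [hhself]
    · show tp (hh p p') = tp (hh p p)
      rw [hhself, hhtp]
  · intro x hx
    exact ⟨.inl ⟨x, hx⟩, trivial, rfl⟩
  · intro y' hy' y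
    rcases y' with k' | p'
    · rcases y with k | p
      · exact ⟨rfl, rfl⟩
      · exact ⟨(hhself p).symm, rfl⟩
    · exact hy'.elim
  · intro y
    rcases y with k | p
    · have hG : ∀ r, w k.1 r ∈ Set.range G := by
        intro r
        refine ⟨.inr (.inl (tp k.1, r)), ?_⟩
        show w (sel (tp k.1)) r = _
        rw [(hking k.1).1 k.2 _ (hsel k.1)]
      refine ⟨fun r => if hr : ¬ king (w k.1 r) then .inr (⟨w k.1 r, hr, hG r⟩, 0, r) else .inl k, ?_⟩
      intro r h1 h2
      have h1' : ¬ king (w k.1 r) := h1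
      beta_reduce
      rw [dif_pos h1']
      refine ⟨rfl, rfl, id, ?_⟩
      intro s h3 h4 h5
      have h3' : ¬ king (w k.1 s) := h3
      rw [dif_pos h3'] at h5
      exact congrArg (fun v : V => v.2.2) (Sum.inr.inj h5)
    · have e1 : h (.inr p) (.inr p) = p.1.1 := hhself p
      simp only [e1]
      have hS : ∀ r, ¬ king (w p.1.1 r) → ¬ king (sel (tp (w p.1.1 r))) := by
        intro r hr hk
        have := (hking _).1 hk (w p.1.1 r) (hsel _).symm
        rw [← this] at hk
        exact hr hk
      refine ⟨fun r => if hr : ¬ king (w p.1.1 r) then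
        .inr (⟨sel (tp (w p.1.1 r)), hS r hr, ⟨.inl (tp (w p.1.1 r)), rfl⟩⟩, p.2.1 + 1, r)
        else .inr p, ?_⟩
      intro r h1 h2
      beta_reduce
      rw [dif_pos h1]
      have he : edge p (⟨sel (tp (w p.1.1 r)), hS r h1, ⟨.inl (tp (w p.1.1 r)), rfl⟩⟩, p.2.1 + 1, r) :=
        ⟨rfl, h1, h2, rfl⟩
      refine ⟨(hhedge _ _ he).1, (hhedge _ _ he).2, id, ?_⟩
      intro s h3 h4 h5
      rw [dif_pos h3] at h5
      exact congrArg (fun v : V => v.2.2) (Sum.inr.inj h5)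
  · let r0 : Req := Classical.arbitrary Req
    have g0 : x0 ∈ Set.range G := ⟨.inr (.inr true), rfl⟩
    have g1 : x1 ∈ Set.range G := ⟨.inr (.inr false), rfl⟩
    have key : ∀ (a b : X) (ha : ¬ king a) (hb : ¬ king b) (ga : a ∈ Set.range G)
      (gb : b ∈ Set.range G), hh (⟨a, ha, ga⟩, 0, r0) (⟨b, hb, gb⟩, 0, r0) = a := by
      intro a b ha hb ga gb
      by_cases hab : a = b
      · subst hab; exact hhself _
      · have hn : ∀ p q : V, p.2.1 = 0 → q.2.1 = 0 → ¬ edge p q := by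
          intro p q hp hq he
          have := he.1
          rw [hp, hq] at this
          revert this; decide
        exact hhne _ _ (hn _ _ rfl rfl) (hn _ _ rfl rfl) hab
    by_cases k0 : king x0 <;> by_cases k1 : king x1
    · exact ⟨.inl ⟨x0, k0⟩, .inl ⟨x1, k1⟩, rfl, rfl⟩
    · exact ⟨.inl ⟨x0, k0⟩, .inr (⟨x1, k1, g1⟩, 0, r0), rfl, rfl⟩
    · exact ⟨.inr (⟨x0, k0, g0⟩, 0, r0), .inl ⟨x1, k1⟩, rfl, rfl⟩
    · exact ⟨.inr (⟨x0, k0, g0⟩, 0, r0), .inr (⟨x1, k1, g1⟩, 0, r0), key x0 x1 k0 k1 g0 g1, key x1 x0 k1 k0 g1 g0⟩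

/-- Good tuples over a node. -/
def GoodTup {A Λ Q Y : Type} (lam : A → A → Λ) (cls : A → Q) (h : Y → Y → Q) (y : Y)
    (x : Y → A) : Prop :=
  (∀ y', cls (x y') = h y y') ∧ (∀ y', lam (x y') (x y') = lam (x y) (x y)) ∧
  (∀ d : A, ∃ y' d', lam (x y') d' = lam (x y) d ∧ cls d' = h y' y)

open Classical in
theorem lev1 {A : Bool → Type} {Λ Q : Type} [Fintype Λ] (lam : ∀ i, A i → A i → Λ)
    (cls : ∀ i, A i → Q)
    (L2 : ∀ i a b a' b', lam i a b = lam i a' b' → lam i a a = lam i a' a')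
    (q0 q1 : Q) (hΛ : Nonempty Λ) :
    ∃ (Y : Type) (_ : Fintype Y) (h : Y → Y → Q),
      Fintype.card Y ≤ 2 ^ (4 * Fintype.card Λ) +
        (2 ^ (4 * Fintype.card Λ) + 2 ^ (4 * Fintype.card Λ) * (4 * Fintype.card Λ) + 2) *
          (3 * (4 * Fintype.card Λ)) ∧
      (∀ y y', h y y' = h y' y ↔ y = y') ∧
      (∀ i y y' t, (∃ a b, a ≠ b ∧ cls i a = h y y' ∧ cls i b = h y y' ∧ lam i a a = t ∧
          lam i b b = t) →
        (∃ a b, a ≠ b ∧ cls i a = h y y ∧ cls i b = h y y ∧ lam i a a = t ∧ lam i b b = t)) ∧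
      (∀ i y y' f, cls i f = h y y' → ∃ x : Y → A i, GoodTup (lam i) (cls i) h y x ∧ x y' = f) ∧
      (∃ y0 y1, h y0 y1 = q0 ∧ h y1 y0 = q1) := by
  let tp : Q → (Bool → Λ → Bool × Bool) := fun q i t =>
    (decide (∃ a, cls i a = q ∧ lam i a a = t),
     decide (∃ a b, a ≠ b ∧ cls i a = q ∧ cls i b = q ∧ lam i a a = t ∧ lam i b b = t))
  obtain ⟨king, hking⟩ : ∃ king : Q → Prop, ∀ x, king x ↔ (∀ x', tp x' = tp x → x' = x) :=
    ⟨_, fun _ => Iff.rfl⟩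
  have hw : ∀ (q : Q) (r : Bool × Λ × Bool), ∃ q', 
      (∃ e d, cls r.1 e = q ∧ lam r.1 e d = r.2.1 ∧ ¬ king (cls r.1 d) ∧ cls r.1 d ≠ q) →
      (∃ e d, cls r.1 e = q ∧ lam r.1 e d = r.2.1 ∧ cls r.1 d = q' ∧ ¬ king q' ∧ q' ≠ q) := by
    intro q r
    by_cases hx : (∃ e d, cls r.1 e = q ∧ lam r.1 e d = r.2.1 ∧ ¬ king (cls r.1 d) ∧ cls r.1 d ≠ q)
    · obtain ⟨e, d, h1, h2, h3, h4⟩ := hx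
      exact ⟨cls r.1 d, fun _ => ⟨e, d, h1, h2, rfl, h3, h4⟩⟩
    · exact ⟨q, fun h => absurd h hx⟩
  choose w hw using hw
  obtain ⟨Y, iY, h, Kg, hcard, K1, K2, K3, K4, K5, K6⟩ := lemK tp w q0 q1
  simp only [← hking] at K3 K5
  have K2a : ∀ i y y' t, (∃ a, cls i a = h y y' ∧ lam i a a = t) ↔
      (∃ a, cls i a = h y y ∧ lam i a a = t) := by
    intro i y y' t
    have := congrArg Prod.fst (congrFun (congrFun (K2 y y') i) t)
    simpa only [tp, decide_eq_decide] using this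
  have K2b : ∀ i y y' t, (∃ a b, a ≠ b ∧ cls i a = h y y' ∧ cls i b = h y y' ∧ lam i a a = t ∧
          lam i b b = t) ↔
        (∃ a b, a ≠ b ∧ cls i a = h y y ∧ cls i b = h y y ∧ lam i a a = t ∧ lam i b b = t) := by
    intro i y y' t
    have := congrArg Prod.snd (congrFun (congrFun (K2 y y') i) t)
    simpa only [tp, decide_eq_decide] using this
  refine ⟨Y, iY, h, ?_, K1, fun i y y' t => (K2b i y y' t).1, ?_, K6⟩
  · have e1 : Fintype.card (Bool → Λ → Bool × Bool) = 2 ^ (4 * Fintype.card Λ) := by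
      simp only [Fintype.card_fun, Fintype.card_prod, Fintype.card_bool]
      rw [show (2 * 2 : ℕ) = 2 ^ 2 by norm_num, ← pow_mul, ← pow_mul]
      congr 1; ring
    have e2 : Fintype.card (Bool × Λ × Bool) = 4 * Fintype.card Λ := by
      simp only [Fintype.card_prod, Fintype.card_bool]; ring
    rw [e1, e2] at hcard
    exact hcard
  · intro i y y' f hf
    obtain ⟨rf, hrf⟩ := K5 y
    have he : ∃ e, cls i e = h y y ∧ lam i e e = lam i f f ∧ (h y y' = h y y → e = f) := by
      by_cases hyy : h y y' = h y y
      · exact ⟨f, hf.trans hyy, rfl, fun _ => rfl⟩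
      · obtain ⟨e, h1, h2⟩ := (K2a i y y' (lam i f f)).1 ⟨f, hf, rfl⟩
        exact ⟨e, h1, h2, fun h => absurd h hyy⟩
    obtain ⟨e, he1, he2, he3⟩ := he
    have hex : ∀ y'', ∃ u, cls i u = h y y'' ∧ lam i u u = lam i f f ∧ (y'' = y' → u = f) ∧
        (y'' = y → u = e) ∧ (Kg y'' → u = e) ∧
        (∀ l c, y'' = rf (i, l, c) → y'' ≠ y' →
          (∃ d, lam i e d = l ∧ ¬ king (cls i d) ∧ cls i d ≠ h y y) →
          ∃ d', cls i d' = h y'' y ∧ lam i u d' = l) := by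
      intro y''
      by_cases c1 : y'' = y'
      · subst c1
        refine ⟨f, hf, rfl, fun _ => rfl, ?_, ?_, fun l c _ h => absurd rfl h⟩
        · rintro rfl; exact (he3 rfl).symm
        · intro hk; exact (he3 (K4 _ hk y).1).symm
      by_cases c2 : ∃ l c, y'' = rf (i, l, c) ∧
          (∃ d, lam i e d = l ∧ ¬ king (cls i d) ∧ cls i d ≠ h y y)
      · obtain ⟨l, c, rfl, d, hd1, hd2, hd3⟩ := c2
        obtain ⟨e', d', g1, g2, g3, g4, g5⟩ := hw (h y y) (i, l, c) ⟨e, d, he1, hd1, hd2, hd3⟩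
        obtain ⟨r1, r2, r3, r4⟩ := hrf (i, l, c) g4 g5
        refine ⟨e', g1.trans r1.symm, ?_, fun h => absurd h c1, ?_, fun h => absurd h r3, ?_⟩
        · rw [← he2]
          exact L2 i _ _ _ _ (g2.trans hd1.symm)
        · intro hh
          rw [hh] at r2
          exact absurd r2.symm g5
        · rintro l' c' hrr - ⟨d2, k1, k2, k3⟩
          obtain ⟨_, _, _, _, _, m4, m5⟩ := hw (h y y) (i, l', c') ⟨e, d2, he1, k1, k2, k3⟩
          have := r4 _ m4 m5 hrr
          simp only [Prod.mk.injEq, true_and] at this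
          exact ⟨d', g3.trans r2.symm, g2.trans this.1⟩
      · have : ∃ u, cls i u = h y y'' ∧ lam i u u = lam i f f ∧ (h y y'' = h y y → u = e) := by
          by_cases c3 : h y y'' = h y y
          · exact ⟨e, he1.trans c3.symm, he2, fun _ => rfl⟩
          · obtain ⟨u, h1, h2⟩ := (K2a i y y'' (lam i f f)).2 ⟨e, he1, he2⟩
            exact ⟨u, h1, h2, fun h => absurd h c3⟩
        obtain ⟨u, u1, u2, u3⟩ := this
        refine ⟨u, u1, u2, fun h => absurd h c1, ?_, ?_, ?_⟩
        · rintro rfl; exact u3 rfl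
        · intro hk; exact u3 (K4 _ hk y).1
        · intro l c h1 _ h2
          exact absurd ⟨l, c, h1, h2⟩ c2
    choose x x1 x2 x3 x4 x5 x6 using hex
    have hxy : x y = e := x4 y rfl
    refine ⟨x, ⟨x1, fun y'' => by rw [x2, x2], ?_⟩, x3 y' rfl⟩
    intro d
    rw [hxy]
    by_cases d1 : cls i d = h y y
    · exact ⟨y, d, by rw [hxy], d1⟩
    by_cases d2 : king (cls i d)
    · obtain ⟨k, hk1, hk2⟩ := K3 _ d2
      exact ⟨k, d, by rw [x5 k hk1], by rw [(K4 k hk1 y).2, hk2]⟩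
    · have hc : ∃ c, rf (i, lam i e d, c) ≠ y' := by
        by_contra hcon
        push Not at hcon
        have hv : ∀ c, _ := fun c => hw (h y y) (i, lam i e d, c) ⟨e, d, he1, rfl, d2, d1⟩
        obtain ⟨_, _, _, _, _, m4, m5⟩ := hv true
        obtain ⟨_, _, _, _, _, n4, n5⟩ := hv false
        have := (hrf _ m4 m5).2.2.2 _ n4 n5 ((hcon true).trans (hcon false).symm)
        simp at this
      obtain ⟨c, hc⟩ := hc
      obtain ⟨d', p1, p2⟩ := x6 _ _ c rfl hc ⟨d, rfl, d2, d1⟩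
      exact ⟨_, d', p2, p1⟩

open Classical in
theorem lev2 {A Λ Q Y : Type} (lam : A → A → Λ) (cls : A → Q) (h : Y → Y → Q)
    (K1 : ∀ y y', h y y' = h y' y ↔ y = y')
    (K2 : ∀ y y' t, (∃ a b, a ≠ b ∧ cls a = h y y' ∧ cls b = h y y' ∧ lam a a = t ∧
          lam b b = t) →
        (∃ a b, a ≠ b ∧ cls a = h y y ∧ cls b = h y y ∧ lam a a = t ∧ lam b b = t))
    (Ext : ∀ y y' f, cls f = h y y' → ∃ x : Y → A, GoodTup lam cls h y x ∧ x y' = f) :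
    ∃ (X : Type) (node : X → Y) (co : X → Y → A) (H : X → X → A),
      (∀ p, GoodTup lam cls h (node p) (co p)) ∧
      (∀ y y' f, cls f = h y y' → ∃ p, node p = y ∧ co p y' = f) ∧
      (∀ p q, H p q = H q p ↔ p = q) ∧
      (∀ p, H p p = co p (node p)) ∧
      (∀ p q, cls (H p q) = h (node p) (node q)) ∧
      (∀ p q, lam (H p q) (H p q) = lam (H p p) (H p p)) ∧
      (∀ p y' f, cls f = h y' (node p) → ∃ q, node q = y' ∧ H p q = co p y' ∧ H q p = f) := by
  let X := {p : Y × (Y → A) // GoodTup lam cls h p.1 p.2}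
  have halt : ∀ a : A, ∃ b, (∃ c, c ≠ a ∧ cls c = cls a ∧ lam c c = lam a a) →
      (b ≠ a ∧ cls b = cls a ∧ lam b b = lam a a) := by
    intro a
    by_cases hc : (∃ c, c ≠ a ∧ cls c = cls a ∧ lam c c = lam a a)
    · obtain ⟨c, hc'⟩ := hc
      exact ⟨c, fun _ => hc'⟩
    · exact ⟨a, fun h => absurd h hc⟩
  choose alt halt using halt
  let H : X → X → A := fun p q =>
    if p.1.1 = q.1.1 ∧ p ≠ q ∧ p.1.2 p.1.1 = q.1.2 p.1.1 ∧ ¬ WellOrderingRel p q then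
      alt (p.1.2 p.1.1) else p.1.2 q.1.1
  have hcls : ∀ (p : X) y', cls (p.1.2 y') = h p.1.1 y' := fun p => p.2.1
  have hlam : ∀ (p : X) y', lam (p.1.2 y') (p.1.2 y') = lam (p.1.2 p.1.1) (p.1.2 p.1.1) :=
    fun p => p.2.2.1
  have hnon : ∀ p q : X, p.1.1 = q.1.1 → p ≠ q → p.1.2 p.1.1 = q.1.2 p.1.1 →
      (alt (p.1.2 p.1.1) ≠ p.1.2 p.1.1 ∧ cls (alt (p.1.2 p.1.1)) = cls (p.1.2 p.1.1) ∧
        lam (alt (p.1.2 p.1.1)) (alt (p.1.2 p.1.1)) = lam (p.1.2 p.1.1) (p.1.2 p.1.1)) := by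
    intro p q h1 h2 h3
    apply halt
    have : ∃ y', p.1.2 y' ≠ q.1.2 y' := by
      by_contra hcon
      push Not at hcon
      exact h2 (Subtype.ext (Prod.ext h1 (funext hcon)))
    obtain ⟨y', hy'⟩ := this
    obtain ⟨a, b, hab, ha, hb, la, lb⟩ := K2 p.1.1 y' (lam (p.1.2 p.1.1) (p.1.2 p.1.1))
      ⟨_, _, hy', hcls p y', by rw [hcls q y', h1], hlam p y', by rw [hlam q y', ← h1, h3]⟩
    by_cases hap : a = p.1.2 p.1.1
    · exact ⟨b, fun h => hab (hap.trans h.symm), by rw [hb, hcls], lb⟩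
    · exact ⟨a, hap, by rw [ha, hcls], la⟩
  have Hpp : ∀ p, H p p = p.1.2 p.1.1 := fun p => by simp [H]
  have Hd : ∀ p q : X, ¬ (p.1.1 = q.1.1 ∧ p ≠ q ∧ p.1.2 p.1.1 = q.1.2 p.1.1) →
      H p q = p.1.2 q.1.1 := by
    intro p q hn
    exact if_neg (fun h => hn ⟨h.1, h.2.1, h.2.2.1⟩)
  have H4 : ∀ (p : X) y' f, cls f = h y' p.1.1 →
      ∃ q : X, q.1.1 = y' ∧ H p q = p.1.2 y' ∧ H q p = f := by
    intro p y' f hf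
    by_cases hy : y' = p.1.1 ∧ f = p.1.2 p.1.1
    · exact ⟨p, hy.1.symm, by rw [Hpp, hy.1], by rw [Hpp, hy.2]⟩
    · obtain ⟨x, hx, hxf⟩ := Ext y' p.1.1 f hf
      refine ⟨⟨(y', x), hx⟩, rfl, ?_, ?_⟩
      · apply Hd
        rintro ⟨e1, -, e2⟩
        exact hy ⟨e1.symm, by rw [e2]; exact hxf.symm⟩
      · rw [Hd]
        · exact hxf
        · rintro ⟨e1, -, e2⟩
          have e1' : y' = p.1.1 := e1
          have e2' : x y' = p.1.2 y' := e2
          exact hy ⟨e1', by rw [← hxf, ← e1', e2']⟩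
  have Hcase : ∀ p q : X, H p q = p.1.2 q.1.1 ∨ (p.1.1 = q.1.1 ∧ p ≠ q ∧
      p.1.2 p.1.1 = q.1.2 p.1.1 ∧ ¬ WellOrderingRel p q ∧ H p q = alt (p.1.2 p.1.1)) := by
    intro p q
    by_cases hc : p.1.1 = q.1.1 ∧ p ≠ q ∧ p.1.2 p.1.1 = q.1.2 p.1.1 ∧ ¬ WellOrderingRel p q
    · exact Or.inr ⟨hc.1, hc.2.1, hc.2.2.1, hc.2.2.2, if_pos hc⟩
    · exact Or.inl (if_neg hc)
  have Hcls : ∀ p q : X, cls (H p q) = h p.1.1 q.1.1 := by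
    intro p q
    rcases Hcase p q with hc | ⟨c1, c2, c3, c4, c5⟩
    · rw [hc, hcls]
    · rw [c5, (hnon p q c1 c2 c3).2.1, hcls, ← c1]
  refine ⟨X, fun p => p.1.1, fun p => p.1.2, H, fun p => p.2, ?_, ?_, Hpp, Hcls, ?_, H4⟩
  · intro y y' f hf
    obtain ⟨x, hx, hxf⟩ := Ext y y' f hf
    exact ⟨⟨(y, x), hx⟩, rfl, hxf⟩
  · intro p q
    constructor
    · intro hpq
      by_contra hne
      have c1 : p.1.1 = q.1.1 := by
        apply (K1 _ _).1
        rw [← Hcls, ← Hcls, hpq]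
      by_cases c3 : p.1.2 p.1.1 = q.1.2 p.1.1
      · have n1 := (hnon p q c1 hne c3).1
        rcases trichotomous_of (WellOrderingRel (α := X)) p q with ht | ht | ht
        · have ht' : ¬ WellOrderingRel q p := fun h => asymm_of _ ht h
          have e1 : H p q = p.1.2 q.1.1 := if_neg (fun h => h.2.2.2 ht)
          have e2 : H q p = alt (q.1.2 q.1.1) :=
            if_pos ⟨c1.symm, Ne.symm hne, by rw [← c1, c3], ht'⟩
          rw [e1, e2, ← c1, ← c3] at hpq
          exact n1 hpq.symm
        · exact hne ht
        · have ht' : ¬ WellOrderingRel p q := fun h => asymm_of _ ht h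
          have e1 : H q p = q.1.2 p.1.1 := if_neg (fun h => h.2.2.2 ht)
          have e2 : H p q = alt (p.1.2 p.1.1) := if_pos ⟨c1, hne, c3, ht'⟩
          rw [e1, e2, ← c3] at hpq
          exact n1 hpq
      · rw [Hd p q (fun h => c3 h.2.2), Hd q p (fun h => c3 (by rw [c1]; exact h.2.2.symm)), ← c1] at hpq
        exact c3 hpq
    · rintro rfl; rfl
  · intro p q
    rw [Hpp]
    rcases Hcase p q with hc | ⟨c1, c2, c3, c4, c5⟩
    · rw [hc, hlam]
    · rw [c5, (hnon p q c1 c2 c3).2.2]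

open Classical in
theorem lev3 {A Λ Q Y : Type} [Fintype Λ] [Fintype Y] (lam : A → A → Λ) (cls : A → Q)
    (h : Y → Y → Q)
    (K1 : ∀ y y', h y y' = h y' y ↔ y = y')
    (K2 : ∀ y y' t, (∃ a b, a ≠ b ∧ cls a = h y y' ∧ cls b = h y y' ∧ lam a a = t ∧
          lam b b = t) →
        (∃ a b, a ≠ b ∧ cls a = h y y ∧ cls b = h y y ∧ lam a a = t ∧ lam b b = t))
    (Ext : ∀ y y' f, cls f = h y y' → ∃ x : Y → A, GoodTup lam cls h y x ∧ x y' = f)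
    (a0 a1 : A) (y0 y1 : Y) (ha0 : cls a0 = h y0 y1) (ha1 : cls a1 = h y1 y0) :
    ∃ (X : Type) (_ : Fintype X) (node : X → Y) (H : X → X → A),
      Fintype.card X ≤ (Fintype.card Y * Fintype.card Λ) +
        ((Fintype.card Y * Fintype.card Λ) +
          (Fintype.card Y * Fintype.card Λ) * (Fintype.card Y * Fintype.card Λ) + 2) *
          (3 * (Fintype.card Y * Fintype.card Λ)) ∧
      (∀ p q, H p q = H q p ↔ p = q) ∧
      (∀ p q, cls (H p q) = h (node p) (node q)) ∧
      (∀ p q, lam (H p q) (H p q) = lam (H p p) (H p p)) ∧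
      (∀ p d, ∃ q, lam (H p q) (H q p) = lam (H p p) d) ∧
      (∀ p, ∃ x : Y → A, (∀ y', cls (x y') = h (node p) y') ∧
        ∀ y' v, cls v = h y' (node p) → ∃ q, node q = y' ∧ lam (H p q) (H q p) = lam (x y') v) ∧
      (∃ p0 p1, node p0 = y0 ∧ node p1 = y1 ∧ H p0 p1 = a0 ∧ H p1 p0 = a1) := by
  obtain ⟨X, node, co, H, g1, g2, g3, g4, g5, g6, g7⟩ := lev2 lam cls h K1 K2 Ext
  obtain ⟨p0, hp0, hp0'⟩ := g2 y0 y1 a0 ha0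
  obtain ⟨p1, hp1, hp1', hp1''⟩ := g7 p0 y1 a1 (by rw [hp0]; exact ha1)
  have hw : ∀ (p : X) (r : Y × Λ), ∃ q', (∃ q, node q = r.1 ∧ lam (H p q) (H q p) = r.2) →
      (node q' = r.1 ∧ lam (H p q') (H q' p) = r.2) := by
    intro p r
    by_cases hx : (∃ q, node q = r.1 ∧ lam (H p q) (H q p) = r.2)
    · obtain ⟨q, hq⟩ := hx
      exact ⟨q, fun _ => hq⟩
    · exact ⟨p, fun h => absurd h hx⟩
  choose w hw using hw
  have : Nonempty (Y × Λ) := ⟨(y0, lam a0 a0)⟩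
  obtain ⟨Z, iZ, k, Kg, hcard, k1, k2, k3, k4, k5, k6⟩ :=
    lemK (fun p : X => (node p, lam (H p p) (H p p))) w p0 p1
  have k2a : ∀ y y', node (k y y') = node (k y y) := fun y y' => congrArg Prod.fst (k2 y y')
  have k2b : ∀ y y', lam (H (k y y') (k y y')) (H (k y y') (k y y')) =
    lam (H (k y y) (k y y)) (H (k y y) (k y y)) := fun y y' => congrArg Prod.snd (k2 y y')
  have k5' : ∀ y r, ∃ y', k y y' = k y y ∧ k y' y = w (k y y) r := by
    intro y r
    by_cases c1 : w (k y y) r = k y y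
    · exact ⟨y, rfl, c1.symm⟩
    by_cases c2 : ∀ x', (node x', lam (H x' x') (H x' x')) =
      (node (w (k y y) r), lam (H (w (k y y) r) (w (k y y) r)) (H (w (k y y) r) (w (k y y) r))) →
        x' = w (k y y) r
    · obtain ⟨z, hz, hz'⟩ := k3 _ c2
      exact ⟨z, (k4 z hz y).1, (k4 z hz y).2.trans hz'⟩
    · obtain ⟨f, hf⟩ := k5 y
      exact ⟨f r, (hf r c2 c1).1, (hf r c2 c1).2.1⟩
  have key : ∀ y q, ∃ y', node (k y' y') = node q ∧
      lam (H (k y y') (k y' y)) (H (k y' y) (k y y')) = lam (H (k y y) q) (H q (k y y)) := by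
    intro y q
    obtain ⟨y', e1, e2⟩ := k5' y (node q, lam (H (k y y) q) (H q (k y y)))
    obtain ⟨e3, e4⟩ := hw (k y y) (node q, lam (H (k y y) q) (H q (k y y))) ⟨q, rfl, rfl⟩
    exact ⟨y', by rw [← k2a y' y, e2]; exact e3, by rw [e1, e2]; exact e4⟩
  refine ⟨Z, iZ, fun z => node (k z z), fun z z' => H (k z z') (k z' z), ?_, ?_, ?_, ?_, ?_, ?_, ?_⟩
  · simpa only [Fintype.card_prod] using hcard
  · intro p q
    rw [g3, k1]
  · intro p q
    rw [g5, k2a, k2a q]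
  · intro p q
    show lam (H _ _) (H _ _) = _
    rw [g6, k2b]
  · intro p d
    obtain ⟨y', d', e1, e2⟩ := (g1 (k p p)).2.2 d
    obtain ⟨q, e3, e4, e5⟩ := g7 (k p p) y' d' e2
    obtain ⟨z, -, e6⟩ := key p q
    exact ⟨z, e6.trans (by rw [e4, e5, e1, ← g4])⟩
  · intro p
    refine ⟨co (k p p), (g1 (k p p)).1, ?_⟩
    intro y' v hv
    obtain ⟨q, e3, e4, e5⟩ := g7 (k p p) y' v hv
    obtain ⟨z, e7, e6⟩ := key p q
    exact ⟨z, e7.trans e3, e6.trans (by rw [e4, e5])⟩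
  · obtain ⟨z0, z1, e0, e1⟩ := k6
    refine ⟨z0, z1, ?_, ?_, ?_, ?_⟩
    · show node _ = _
      rw [← k2a z0 z1, e0, hp0]
    · show node _ = _
      rw [← k2a z1 z0, e1, hp1]
    · show H _ _ = _
      rw [e0, e1, hp1', hp0']
    · show H _ _ = _
      rw [e0, e1, hp1'']

theorem card_arith1 (M F : ℕ) (hM : 16 ≤ M) (hF : F ≤ M + (M + M * M + 2) * (3 * M)) :
    F ≤ M ^ 4 := by
  have : M ^ 4 = M * (M * (M * M)) := by ring
  nlinarith [Nat.mul_le_mul hM (le_refl M), Nat.mul_le_mul hM (le_refl (M * M)), Nat.mul_le_mul hM (le_refl (M * M * M))]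

theorem card_arith (N y F : ℕ) (hN : 1 ≤ N)
    (hy : y ≤ 2 ^ (4 * N) + (2 ^ (4 * N) + 2 ^ (4 * N) * (4 * N) + 2) * (3 * (4 * N)))
    (hF : F ≤ (y * N) + ((y * N) + (y * N) * (y * N) + 2) * (3 * (y * N))) :
    F ≤ 2 ^ (80 * N) := by
  have hM : 16 ≤ 2 ^ (4 * N) := by
    calc 16 = 2 ^ (4 * 1) := by norm_num
      _ ≤ _ := Nat.pow_le_pow_right (by norm_num) (by omega)
  have hNM : 4 * N ≤ 2 ^ (4 * N) := Nat.lt_two_pow_self.le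
  have e : 2 ^ (80 * N) = ((2 ^ (4 * N)) ^ 5) ^ 4 := by rw [← pow_mul, ← pow_mul]; ring_nf
  rw [e]
  generalize 2 ^ (4 * N) = M at *
  have hy' : y ≤ M ^ 4 := card_arith1 M y hM (hy.trans (by gcongr))
  have hyN : y * N ≤ M ^ 5 := by
    rw [pow_succ]
    exact Nat.mul_le_mul hy' (by omega)
  apply card_arith1 (M ^ 5) F
  · exact hM.trans (Nat.le_self_pow (by norm_num) M)
  · exact hF.trans (by gcongr)

theorem absMain {A : Bool → Type} {Λ Q P : Type} [Fintype Λ] (lam : ∀ i, A i → A i → Λ)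
    (rho : ∀ i, A i → A i → P) (cls : ∀ i, A i → Q)
    (L2 : ∀ i a b a' b', lam i a b = lam i a' b' → lam i a a = lam i a' a')
    (L4 : ∀ i a b a' b', lam i a b = lam i a' b' → rho i a b = rho i a' b')
    (C1 : ∀ i j a b, cls i a = cls j b → ∀ a', ∃ b', cls j b' = cls i a' ∧
      rho i a a' = rho j b b')
    (a0 a1 : ∀ i, A i) (q0 q1 : Q) (h0 : ∀ i, cls i (a0 i) = q0) (h1 : ∀ i, cls i (a1 i) = q1) :
    ∃ (X : Bool → Type) (_ : ∀ i, Fintype (X i)) (Y : Type) (node : ∀ i, X i → Y)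
      (H : ∀ i, X i → X i → A i) (b0 b1 : ∀ i, X i),
      (∀ i, Fintype.card (X i) ≤ 2 ^ (80 * Fintype.card Λ)) ∧
      (∀ i p q, H i p q = H i q p ↔ p = q) ∧
      (∀ i p q, lam i (H i p q) (H i p q) = lam i (H i p p) (H i p p)) ∧
      (∀ i p d, ∃ q, lam i (H i p q) (H i q p) = lam i (H i p p) d) ∧
      (∀ i j a b, node i a = node j b → ∀ a', ∃ b', node j b' = node i a' ∧
        rho i (H i a a') (H i a' a) = rho j (H j b b') (H j b' b)) ∧
      (∀ i, H i (b0 i) (b1 i) = a0 i ∧ H i (b1 i) (b0 i) = a1 i) ∧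
      (∀ i j, node i (b0 i) = node j (b0 j) ∧ node i (b1 i) = node j (b1 j)) := by
  have hΛ : Nonempty Λ := ⟨lam true (a0 true) (a0 true)⟩
  obtain ⟨Y, iY, h, hc, k1, k2, ext, y0, y1, e0, e1⟩ := lev1 lam cls L2 q0 q1 hΛ
  have := fun i => lev3 (lam i) (cls i) h k1 (k2 i) (ext i) (a0 i) (a1 i) y0 y1
    ((h0 i).trans e0.symm) ((h1 i).trans e1.symm)
  choose X iX node H hH using this
  have x1 := fun i => (hH i).1
  have x2 := fun i => (hH i).2.1
  have x3 := fun i => (hH i).2.2.1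
  have x4 := fun i => (hH i).2.2.2.1
  have x5 := fun i => (hH i).2.2.2.2.1
  have x6 := fun i => (hH i).2.2.2.2.2.1
  have x7 := fun i => (hH i).2.2.2.2.2.2
  choose co co1 co2 using x6
  choose b0 b1 z1 z2 z3 z4 using x7
  refine ⟨X, iX, Y, node, H, b0, b1, ?_, x2, x4, x5, ?_, fun i => ⟨z3 i, z4 i⟩, ?_⟩
  · intro i
    exact card_arith _ _ _ Fintype.card_pos hc (x1 i)
  · intro i j a b hab a'
    obtain ⟨v, hv1, hv2⟩ := C1 i j (H i a a') (co j b (node i a')) (by rw [x3, co1, hab]) (H i a' a)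
    have hb0 : cls j v = h (node i a') (node j b) := by rw [hv1, x3, hab]
    obtain ⟨b', hb1, hb2⟩ := co2 j b (node i a') v hb0
    exact ⟨_, hb1, hv2.trans (L4 j _ _ _ _ hb2).symm⟩
  · intro i j
    rw [z1, z1, z2, z2]; exact ⟨rfl, rfl⟩

/-- Two-variable assignment. -/
def jval {D : Type} (a b : D) : ℕ → D := fun n => ![a, b] (if n = 1 then 1 else 0)

theorem jval_zero {D : Type} (a b : D) : jval a b 0 = a := rfl

theorem jval_one {D : Type} (a b : D) : jval a b 1 = b := rfl

theorem sat_congr_fv {σ : Sig} (A : Str σ) (γ : Fml σ) : ∀ (v w : ℕ → A.dom),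
    (∀ n ∈ γ.fv, v n = w n) → (γ.Sat A v ↔ γ.Sat A w) := by
  induction γ with
  | eq i j =>
    intro v w h
    simp only [Fml.Sat]
    rw [h i (by simp [Fml.fv]), h j (by simp [Fml.fv])]
  | rel R t =>
    intro v w h
    simp only [Fml.Sat]
    have : (fun k => v (t k)) = fun k => w (t k) := by
      funext k
      exact h _ (by simp [Fml.fv])
    rw [this]
  | not γ ih =>
    intro v w h
    simp only [Fml.Sat]
    rw [ih v w h]
  | and γ δ ih1 ih2 =>
    intro v w h
    simp only [Fml.Sat]
    rw [ih1 v w (fun n hn => h n (by simp [Fml.fv, hn])),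
      ih2 v w (fun n hn => h n (by simp [Fml.fv, hn]))]
  | or γ δ ih1 ih2 =>
    intro v w h
    simp only [Fml.Sat]
    rw [ih1 v w (fun n hn => h n (by simp [Fml.fv, hn])),
      ih2 v w (fun n hn => h n (by simp [Fml.fv, hn]))]
  | ex x γ ih =>
    intro v w h
    simp only [Fml.Sat]
    refine exists_congr fun d => ih _ _ fun n hn => ?_
    by_cases hx : n = x
    · subst hx; simp
    · simp only [Function.update_of_ne hx]
      exact h n (by simp [Fml.fv, hn, hx])
  | all x γ ih =>
    intro v w h
    simp only [Fml.Sat]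
    refine forall_congr' fun d => ih _ _ fun n hn => ?_
    by_cases hx : n = x
    · subst hx; simp
    · simp only [Function.update_of_ne hx]
      exact h n (by simp [Fml.fv, hn, hx])

theorem fv_sub_allVars {σ : Sig} (γ : Fml σ) : γ.fv ⊆ γ.allVars := by
  induction γ with
  | eq i j => exact fun _ h => h
  | rel R t => exact fun _ h => h
  | not γ ih => exact ih
  | and γ δ ih1 ih2 => exact Finset.union_subset_union ih1 ih2
  | or γ δ ih1 ih2 => exact Finset.union_subset_union ih1 ih2
  | ex x γ ih =>
    exact (Finset.erase_subset _ _).trans (ih.trans (Finset.subset_insert _ _))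
  | all x γ ih =>
    exact (Finset.erase_subset _ _).trans (ih.trans (Finset.subset_insert _ _))

theorem sat_congr2 {σ : Sig} (A : Str σ) (γ : Fml σ) (hγ : IsFO2 γ) (v w : ℕ → A.dom)
    (h0 : v 0 = w 0) (h1 : v 1 = w 1) : (γ.Sat A v ↔ γ.Sat A w) := by
  apply sat_congr_fv
  intro n hn
  have := hγ (fv_sub_allVars γ hn)
  simp only [Finset.mem_insert, Finset.mem_singleton] at this
  rcases this with rfl | rfl
  · exact h0
  · exact h1

open Classical in
/-- Subformulas. -/
noncomputable def jsub {σ : Sig} : Fml σ → Finset (Fml σ)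
  | .eq i j => {.eq i j}
  | .rel R t => {.rel R t}
  | .not φ => insert (.not φ) (jsub φ)
  | .and φ ψ => insert (.and φ ψ) (jsub φ ∪ jsub ψ)
  | .or φ ψ => insert (.or φ ψ) (jsub φ ∪ jsub ψ)
  | .ex x φ => insert (.ex x φ) (jsub φ)
  | .all x φ => insert (.all x φ) (jsub φ)

theorem self_mem_jsub {σ : Sig} (γ : Fml σ) : γ ∈ jsub γ := by
  classical
  cases γ <;> simp [jsub]

theorem card_jsub {σ : Sig} (γ : Fml σ) : (jsub γ).card ≤ γ.size := by
  classical
  induction γ with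
  | eq i j => simp [jsub, Fml.size]
  | rel R t => simp [jsub, Fml.size]
  | not γ ih => exact (Finset.card_insert_le _ _).trans (Nat.succ_le_succ ih)
  | and γ δ ih1 ih2 =>
    exact (Finset.card_insert_le _ _).trans
      (Nat.succ_le_succ ((Finset.card_union_le _ _).trans (add_le_add ih1 ih2)))
  | or γ δ ih1 ih2 =>
    exact (Finset.card_insert_le _ _).trans
      (Nat.succ_le_succ ((Finset.card_union_le _ _).trans (add_le_add ih1 ih2)))
  | ex x γ ih => exact (Finset.card_insert_le _ _).trans (Nat.succ_le_succ ih)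
  | all x γ ih => exact (Finset.card_insert_le _ _).trans (Nat.succ_le_succ ih)

/-- Relevant tuples. -/
def JRlv {σ : Sig} {D : Type} (Γ : Finset (Fml σ)) (R : σ.Rel) (s : Fin (σ.arity R) → D) : Prop :=
  ∃ t0 : Fin (σ.arity R) → ℕ, Fml.rel R t0 ∈ Γ ∧ ∃ a b : D, s = fun k => jval a b (t0 k)

/-- Restrict to relevant tuples. -/
def jhat {σ : Sig} (Γ : Finset (Fml σ)) (A : Str σ) : Str σ :=
  ⟨A.dom, fun R s => A.interp R s ∧ JRlv Γ R s⟩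

open Classical in
theorem rlv_transfer {D E : Type} {k : ℕ} (u : Fin 2 → D) (u' : Fin 2 → E)
    (hu : ∀ i j, u i = u j ↔ u' i = u' j) (t : Fin k → Fin 2) (t0 : Fin k → ℕ) (c d : D)
    (h : u ∘ t = fun m => jval c d (t0 m)) :
    ∃ i j : Fin 2, (u ∘ t = fun m => jval (u i) (u j) (t0 m)) ∧
      (u' ∘ t = fun m => jval (u' i) (u' j) (t0 m)) := by
  have h' : ∀ m, u (t m) = if t0 m = 1 then d else c := by
    intro m
    have := congrFun h m
    simp only [Function.comp, jval] at this
    rw [this]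
    split_ifs <;> rfl
  obtain ⟨i, hi⟩ : ∃ i : Fin 2, ∀ m, t0 m ≠ 1 → u (t m) = u i := by
    by_cases hm : ∃ m, t0 m ≠ 1
    · obtain ⟨m, hm⟩ := hm
      exact ⟨t m, fun m' hm' => by rw [h', h', if_neg hm, if_neg hm']⟩
    · exact ⟨0, fun m hm' => absurd ⟨m, hm'⟩ hm⟩
  obtain ⟨j, hj⟩ : ∃ i : Fin 2, ∀ m, t0 m = 1 → u (t m) = u i := by
    by_cases hm : ∃ m, t0 m = 1
    · obtain ⟨m, hm⟩ := hm
      exact ⟨t m, fun m' hm' => by rw [h', h', if_pos hm, if_pos hm']⟩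
    · exact ⟨0, fun m hm' => absurd ⟨m, hm'⟩ hm⟩
  refine ⟨i, j, ?_, ?_⟩
  · funext m
    simp only [Function.comp, jval]
    split_ifs with hm
    · exact hj m hm
    · exact hi m hm
  · funext m
    simp only [Function.comp, jval]
    split_ifs with hm
    · exact (hu _ _).1 (hj m hm)
    · exact (hu _ _).1 (hi m hm)

theorem hat_piso {σ : Sig} (Γ : Finset (Fml σ)) (τ : Set σ.Rel) (A B : Str σ)
    (u : Fin 2 → A.dom) (u' : Fin 2 → B.dom) (h : PartialIso τ A B u u') :
    PartialIso τ (jhat Γ A) (jhat Γ B) u u' := by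
  refine ⟨h.1, fun R hR t => ?_⟩
  refine and_congr (h.2 R hR t) ⟨?_, ?_⟩
  · rintro ⟨t0, h0, c, d, hcd⟩
    obtain ⟨i, j, -, e⟩ := rlv_transfer u u' h.1 t t0 c d hcd
    exact ⟨t0, h0, _, _, e⟩
  · rintro ⟨t0, h0, c, d, hcd⟩
    obtain ⟨i, j, -, e⟩ := rlv_transfer u' u (fun i j => (h.1 i j).symm) t t0 c d hcd
    exact ⟨t0, h0, _, _, e⟩

theorem hat_sat {σ : Sig} (Γ : Finset (Fml σ)) (A : Str σ) (γ : Fml σ) (hs : jsub γ ⊆ Γ)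
    (h2 : IsFO2 γ) : ∀ v : ℕ → A.dom, (γ.Sat (jhat Γ A) v ↔ γ.Sat A v) := by
  classical
  unfold IsFO2 at h2
  induction γ with
  | eq i j => intro v; exact Iff.rfl
  | rel R t =>
    intro v
    show A.interp R _ ∧ _ ↔ A.interp R _
    refine and_iff_left ⟨t, hs (self_mem_jsub _), v 0, v 1, ?_⟩
    funext k
    have : t k = 0 ∨ t k = 1 := by simpa using h2 (by simp [Fml.allVars] : t k ∈ _)
    rcases this with h | h <;> rw [h] <;> rfl
  | not γ ih =>
    intro v
    exact not_congr (ih ((Finset.subset_insert _ _).trans hs) h2 v)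
  | and γ δ ih1 ih2 =>
    intro v
    have hs' := (Finset.subset_insert _ _).trans hs
    exact and_congr (ih1 (Finset.subset_union_left.trans hs') (Finset.subset_union_left.trans h2) v)
      (ih2 (Finset.subset_union_right.trans hs') (Finset.subset_union_right.trans h2) v)
  | or γ δ ih1 ih2 =>
    intro v
    have hs' := (Finset.subset_insert _ _).trans hs
    exact or_congr (ih1 (Finset.subset_union_left.trans hs') (Finset.subset_union_left.trans h2) v)
      (ih2 (Finset.subset_union_right.trans hs') (Finset.subset_union_right.trans h2) v)
  | ex x γ ih =>
    intro v
    exact exists_congr fun d => ih ((Finset.subset_insert _ _).trans hs)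
      ((Finset.subset_insert _ _).trans h2) _
  | all x γ ih =>
    intro v
    exact forall_congr' fun d => ih ((Finset.subset_insert _ _).trans hs)
      ((Finset.subset_insert _ _).trans h2) _

/-- Labels. -/
def jlam {σ : Sig} (Γ : Finset (Fml σ)) (A : Str σ) (a b : A.dom) :
    (Γ → Fin 2 → Fin 2 → Prop) × Prop :=
  (fun γ i j => γ.1.Sat A (jval (![a, b] i) (![a, b] j)), a = b)

/-- Shared atomic types. -/
def jrho {σ : Sig} (τ : Set σ.Rel) (A : Str σ) (a b : A.dom) :
    Prop × ((R : τ) → (Fin (σ.arity R.1) → Fin 2) → Prop) :=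
  (a = b, fun R t => A.interp R.1 (![a, b] ∘ t))

theorem jlam_sat {σ : Sig} {Γ : Finset (Fml σ)} {A B : Str σ} {a b : A.dom} {a' b' : B.dom}
    (h : jlam Γ A a b = jlam Γ B a' b') (γ : Fml σ) (hγ : γ ∈ Γ) (i j : Fin 2) :
    γ.Sat A (jval (![a, b] i) (![a, b] j)) ↔ γ.Sat B (jval (![a', b'] i) (![a', b'] j)) :=
  iff_of_eq (congrFun (congrFun (congrFun (congrArg Prod.fst h) ⟨γ, hγ⟩) i) j)

theorem jlam_eq {σ : Sig} {Γ : Finset (Fml σ)} {A B : Str σ} {a b : A.dom} {a' b' : B.dom}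
    (h : jlam Γ A a b = jlam Γ B a' b') : a = b ↔ a' = b' :=
  iff_of_eq (congrArg Prod.snd h)

theorem pair_eq_iff {D E : Type} {a b : D} {a' b' : E} (h : a = b ↔ a' = b') (i j : Fin 2) :
    ![a, b] i = ![a, b] j ↔ ![a', b'] i = ![a', b'] j := by
  fin_cases i <;> fin_cases j <;> simp
  · exact h
  · rw [eq_comm, h, eq_comm]

theorem jlam_diag {σ : Sig} {Γ : Finset (Fml σ)} {A B : Str σ} {a b : A.dom} {a' b' : B.dom}
    (h : jlam Γ A a b = jlam Γ B a' b') : jlam Γ A a a = jlam Γ B a' a' := by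
  refine Prod.ext ?_ ?_
  · funext γ i j
    have := propext (jlam_sat h γ.1 γ.2 0 0)
    fin_cases i <;> fin_cases j <;> exact this
  · exact propext ⟨fun _ => rfl, fun _ => rfl⟩

theorem jlam_interp {σ : Sig} {Γ : Finset (Fml σ)} {A B : Str σ}
    (hA : ∀ R s, A.interp R s → JRlv Γ R s)
    (hB : ∀ R s, B.interp R s → JRlv Γ R s) {a b : A.dom} {a' b' : B.dom}
    (h : jlam Γ A a b = jlam Γ B a' b') (R : σ.Rel) (t : Fin (σ.arity R) → Fin 2) :
    A.interp R (![a, b] ∘ t) ↔ B.interp R (![a', b'] ∘ t) := by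
  have aux : ∀ {A B : Str σ}, (∀ R s, A.interp R s → JRlv Γ R s) → 
    ∀ {a b : A.dom} {a' b' : B.dom}, jlam Γ A a b = jlam Γ B a' b' →
    A.interp R (![a, b] ∘ t) → B.interp R (![a', b'] ∘ t) := by
    intro A B hA a b a' b' h hi
    obtain ⟨t0, h0, c, d, hcd⟩ := hA R _ hi
    obtain ⟨i, j, e1, e2⟩ := rlv_transfer ![a, b] ![a', b'] (pair_eq_iff (jlam_eq h)) t t0 c d hcd
    rw [e1] at hi
    rw [e2]
    exact (jlam_sat h _ h0 i j).1 hi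
  exact ⟨aux hA h, aux hB h.symm⟩

theorem jrho_piso {σ : Sig} {τ : Set σ.Rel} {A B : Str σ} {a b : A.dom} {a' b' : B.dom} :
    jrho τ A a b = jrho τ B a' b' ↔ PartialIso τ A B ![a, b] ![a', b'] := by
  constructor
  · intro h
    refine ⟨pair_eq_iff (iff_of_eq (congrArg Prod.fst h)), fun R hR t => ?_⟩
    exact iff_of_eq (congrFun (congrFun (congrArg Prod.snd h) ⟨R, hR⟩) t)
  · intro h
    refine Prod.ext ?_ ?_
    · have := h.1 0 1
      exact propext this
    · funext R t
      exact propext (h.2 R.1 R.2 t)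

/-- The glued structure. -/
def jglue {σ : Sig} (A : Str σ) {X : Type} (H : X → X → A.dom) : Str σ :=
  ⟨X, fun R s => ∃ x z t, s = ![x, z] ∘ t ∧ A.interp R (![H x z, H z x] ∘ t)⟩

theorem pair_swap {D : Type} {k : ℕ} (a b : D) (t : Fin k → Fin 2) :
    ![a, b] ∘ t = ![b, a] ∘ (fun m => 1 - t m) := by
  funext m
  have : ∀ i : Fin 2, ![a, b] i = ![b, a] (1 - i) := by
    intro i; fin_cases i <;> rfl
  exact this (t m)

theorem pair_const {D : Type} {k : ℕ} (a : D) (t : Fin k → Fin 2) :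
    ![a, a] ∘ t = fun _ => a := by
  funext m
  have : ∀ i : Fin 2, ![a, a] i = a := by
    intro i; fin_cases i <;> rfl
  exact this (t m)

theorem fin2_cases (i : Fin 2) : i = 0 ∨ i = 1 := by
  fin_cases i <;> simp

theorem pair_inj {D : Type} {k : ℕ} {a b : D} (hab : a ≠ b) {t t' : Fin k → Fin 2}
    (h : ![a, b] ∘ t = ![a, b] ∘ t') : t = t' := by
  funext m
  have := congrFun h m
  simp only [Function.comp] at this
  rcases fin2_cases (t m) with h1 | h1 <;> rcases fin2_cases (t' m) with h2 | h2 <;>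
    rw [h1, h2] at this ⊢
  · exact absurd this hab
  · exact absurd this.symm hab

theorem jglue_interp {σ : Sig} {Γ : Finset (Fml σ)} (A : Str σ)
    (hA : ∀ R s, A.interp R s → JRlv Γ R s) {X : Type} (H : X → X → A.dom)
    (H2 : ∀ p q, jlam Γ A (H p q) (H p q) = jlam Γ A (H p p) (H p p))
    (R : σ.Rel) (x z : X) (t : Fin (σ.arity R) → Fin 2) :
    (jglue A H).interp R (![x, z] ∘ t) ↔ A.interp R (![H x z, H z x] ∘ t) := by
  constructor
  swap
  · intro h
    exact ⟨x, z, t, rfl, h⟩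
  rintro ⟨x', z', t', e, h⟩
  rcases isEmpty_or_nonempty (Fin (σ.arity R)) with hE | ⟨⟨m0⟩⟩
  · rwa [Subsingleton.elim (![H x z, H z x] ∘ t) (![H x' z', H z' x'] ∘ t')]
  have hP : ∀ p q, A.interp R (fun _ => H p q) ↔ A.interp R (fun _ => H p p) := by
    intro p q
    have := jlam_interp hA hA (H2 p q) R (fun _ => 0)
    exact this
  have C : ∀ (x z : X) (t : Fin (σ.arity R) → Fin 2) (c : X), (∀ m, ![x, z] (t m) = c) →
      (A.interp R (![H x z, H z x] ∘ t) ↔ A.interp R (fun _ => H c c)) := by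
    intro x z t c hc
    by_cases hxz : x = z
    · subst hxz
      have : c = x := by
        rw [← hc m0]
        exact congrFun (pair_const x t) m0
      rw [pair_const, this]
    · rcases fin2_cases (t m0) with h0 | h0
      · have hcx : c = x := by rw [← hc m0, h0]; rfl
        have ht : t = fun _ => 0 := pair_inj hxz (by funext m; rw [Function.comp, hc m, hcx]; rfl)
        rw [ht, hcx]
        exact hP x z
      · have hcx : c = z := by rw [← hc m0, h0]; rfl
        have ht : t = fun _ => 1 := pair_inj hxz (by funext m; rw [Function.comp, hc m, hcx]; rfl)
        rw [ht, hcx]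
        exact hP z x
  by_cases hc : ∀ m, ![x, z] (t m) = ![x, z] (t m0)
  · rw [C x z t _ hc]
    refine (C x' z' t' _ fun m => ?_).1 h
    rw [← hc m]
    exact (congrFun e m).symm
  have hxz : x ≠ z := by
    rintro rfl
    apply hc
    intro m
    exact (congrFun (pair_const x t) m).trans (congrFun (pair_const x t) m0).symm
  have hits : ∀ i, ∃ m, t m = i := by
    intro i
    by_contra hcon
    push Not at hcon
    apply hc
    intro m
    have h1 := hcon m
    have h2 := hcon m0
    have : t m = t m0 := by
      rcases fin2_cases (t m) with e1 | e1 <;> rcases fin2_cases (t m0) with e2 | e2 <;>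
        rcases fin2_cases i with e3 | e3 <;> simp_all
    rw [this]
  obtain ⟨n0, hn0⟩ := hits 0
  obtain ⟨n1, hn1⟩ := hits 1
  have f0 := congrFun e n0
  have f1 := congrFun e n1
  simp only [Function.comp] at f0 f1
  rw [hn0] at f0
  rw [hn1] at f1
  rcases fin2_cases (t' n0) with e0 | e0 <;> rcases fin2_cases (t' n1) with e1 | e1 <;>
    rw [e0] at f0 <;> rw [e1] at f1
  · exact absurd (f0.trans f1.symm) hxz
  · have f0' : x = x' := f0
    have f1' : z = z' := f1
    subst f0' f1'
    rw [pair_inj hxz e]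
    exact h
  · have f0' : x = z' := f0
    have f1' : z = x' := f1
    subst f0' f1'
    rw [pair_swap z x] at e
    rw [pair_swap (H z x)] at h
    rw [pair_inj hxz e]
    exact h
  · exact absurd (f0.trans f1.symm) hxz

theorem quant_aux {D X L : Type} (lam : D → D → L) (H : X → X → D)
    (H2 : ∀ p q, lam (H p q) (H p q) = lam (H p p) (H p p))
    (W : ∀ p d, ∃ q, lam (H p q) (H q p) = lam (H p p) d)
    (F : D → D → Prop) (hF : ∀ a b a' b', lam a b = lam a' b' → (F a b ↔ F a' b'))
    (hE : ∀ a a', lam a a = lam a' a' → ((∃ e, F a e) ↔ ∃ e, F a' e)) (x z : X) :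
    (∃ d, F (H x d) (H d x)) ↔ ∃ e, F (H x z) e := by
  rw [hE _ _ (H2 x z)]
  constructor
  · rintro ⟨d, hd⟩
    exact (hE _ _ (H2 x d)).1 ⟨_, hd⟩
  · rintro ⟨e, he⟩
    obtain ⟨q, hq⟩ := W x e
    exact ⟨q, (hF _ _ _ _ hq).2 he⟩

theorem jglue_sat {σ : Sig} {Γ : Finset (Fml σ)} (A : Str σ)
    (hA : ∀ R s, A.interp R s → JRlv Γ R s) {X : Type} (H : X → X → A.dom)
    (H1 : ∀ p q, H p q = H q p ↔ p = q)
    (H2 : ∀ p q, jlam Γ A (H p q) (H p q) = jlam Γ A (H p p) (H p p))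
    (W : ∀ p d, ∃ q, jlam Γ A (H p q) (H q p) = jlam Γ A (H p p) d)
    (γ : Fml σ) (hs : jsub γ ⊆ Γ) (h2 : IsFO2 γ) :
    ∀ x z : X, (γ.Sat (jglue A H) (jval x z) ↔ γ.Sat A (jval (H x z) (H z x))) := by
  classical
  have upd1 : ∀ (B : Str σ) (δ : Fml σ), IsFO2 δ → ∀ a b d : B.dom,
      (δ.Sat B (Function.update (jval a b) 1 d) ↔ δ.Sat B (jval a d)) :=
    fun B δ hδ a b d => sat_congr2 B δ hδ _ _ (by simp [jval]) (by simp [jval])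
  have upd0 : ∀ (B : Str σ) (δ : Fml σ), IsFO2 δ → ∀ a b d : B.dom,
      (δ.Sat B (Function.update (jval a b) 0 d) ↔ δ.Sat B (jval d b)) :=
    fun B δ hδ a b d => sat_congr2 B δ hδ _ _ (by simp [jval]) (by simp [jval])
  have e1 : ∀ (B : Str σ) (δ : Fml σ), IsFO2 δ → ∀ a b : B.dom,
      ((Fml.ex 1 δ).Sat B (jval a b) ↔ ∃ d, δ.Sat B (jval a d)) :=
    fun B δ hδ a b => exists_congr fun d => upd1 B δ hδ a b d
  have e0 : ∀ (B : Str σ) (δ : Fml σ), IsFO2 δ → ∀ a b : B.dom,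
      ((Fml.ex 0 δ).Sat B (jval a b) ↔ ∃ d, δ.Sat B (jval d b)) :=
    fun B δ hδ a b => exists_congr fun d => upd0 B δ hδ a b d
  have a1 : ∀ (B : Str σ) (δ : Fml σ), IsFO2 δ → ∀ a b : B.dom,
      ((Fml.all 1 δ).Sat B (jval a b) ↔ ¬ ∃ d, ¬ δ.Sat B (jval a d)) :=
    fun B δ hδ a b => (forall_congr' fun d => upd1 B δ hδ a b d).trans (by push Not; rfl)
  have a0 : ∀ (B : Str σ) (δ : Fml σ), IsFO2 δ → ∀ a b : B.dom,
      ((Fml.all 0 δ).Sat B (jval a b) ↔ ¬ ∃ d, ¬ δ.Sat B (jval d b)) :=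
    fun B δ hδ a b => (forall_congr' fun d => upd0 B δ hδ a b d).trans (by push Not; rfl)
  induction γ with
  | eq i j =>
    intro x z
    have hi : i = 0 ∨ i = 1 := by simpa using h2 (by simp [Fml.allVars] : i ∈ _)
    have hj : j = 0 ∨ j = 1 := by simpa using h2 (by simp [Fml.allVars] : j ∈ _)
    rcases hi with rfl | rfl <;> rcases hj with rfl | rfl
    · exact ⟨fun _ => rfl, fun _ => rfl⟩
    · exact (H1 x z).symm
    · exact eq_comm.trans ((H1 x z).symm.trans eq_comm)
    · exact ⟨fun _ => rfl, fun _ => rfl⟩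
  | rel R t =>
    intro x z
    exact jglue_interp A hA H H2 R x z (fun k => if t k = 1 then 1 else 0)
  | not γ ih =>
    intro x z
    exact not_congr (ih ((Finset.subset_insert _ _).trans hs) h2 x z)
  | and γ δ ih1 ih2 =>
    intro x z
    have hs' := (Finset.subset_insert _ _).trans hs
    exact and_congr
      (ih1 (Finset.subset_union_left.trans hs') (Finset.subset_union_left.trans h2) x z)
      (ih2 (Finset.subset_union_right.trans hs') (Finset.subset_union_right.trans h2) x z)
  | or γ δ ih1 ih2 =>
    intro x z
    have hs' := (Finset.subset_insert _ _).trans hs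
    exact or_congr
      (ih1 (Finset.subset_union_left.trans hs') (Finset.subset_union_left.trans h2) x z)
      (ih2 (Finset.subset_union_right.trans hs') (Finset.subset_union_right.trans h2) x z)
  | ex i γ ih =>
    intro x z
    have hs' := (Finset.subset_insert _ _).trans hs
    have h2' : IsFO2 γ := (Finset.subset_insert _ _).trans h2
    have hm := hs (self_mem_jsub _)
    have hi : i = 0 ∨ i = 1 := by simpa using h2 (by simp [Fml.allVars] : i ∈ _)
    rcases hi with rfl | rfl
    · refine (e0 (jglue A H) γ h2' x z).trans
        (((exists_congr fun d => ih hs' h2' d z).trans ?_).trans (e0 A γ h2' _ _).symm)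
      refine quant_aux (jlam Γ A) H H2 W (fun a b => γ.Sat A (jval b a)) ?_ ?_ z x
      · intro a b a' b' h
        exact jlam_sat h γ (hs' (self_mem_jsub _)) 1 0
      · intro a a' h
        rw [← e0 _ _ h2' a a, ← e0 _ _ h2' a' a']
        exact jlam_sat h _ hm 0 0
    · refine (e1 (jglue A H) γ h2' x z).trans
        (((exists_congr fun d => ih hs' h2' x d).trans ?_).trans (e1 A γ h2' _ _).symm)
      refine quant_aux (jlam Γ A) H H2 W (fun a b => γ.Sat A (jval a b)) ?_ ?_ x z
      · intro a b a' b' h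
        exact jlam_sat h γ (hs' (self_mem_jsub _)) 0 1
      · intro a a' h
        rw [← e1 _ _ h2' a a, ← e1 _ _ h2' a' a']
        exact jlam_sat h _ hm 0 0
  | all i γ ih =>
    intro x z
    have hs' := (Finset.subset_insert _ _).trans hs
    have h2' : IsFO2 γ := (Finset.subset_insert _ _).trans h2
    have hm := hs (self_mem_jsub _)
    have hi : i = 0 ∨ i = 1 := by simpa using h2 (by simp [Fml.allVars] : i ∈ _)
    rcases hi with rfl | rfl
    · refine (a0 (jglue A H) γ h2' x z).trans
        (((not_congr (exists_congr fun d => not_congr (ih hs' h2' d z))).trans ?_).trans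
          (a0 A γ h2' _ _).symm)
      refine not_congr
        (quant_aux (jlam Γ A) H H2 W (fun a b => ¬ γ.Sat A (jval b a)) ?_ ?_ z x)
      · intro a b a' b' h
        exact not_congr (jlam_sat h γ (hs' (self_mem_jsub _)) 1 0)
      · intro a a' h
        rw [← not_iff_not, ← a0 _ _ h2' a a, ← a0 _ _ h2' a' a']
        exact jlam_sat h _ hm 0 0
    · refine (a1 (jglue A H) γ h2' x z).trans
        (((not_congr (exists_congr fun d => not_congr (ih hs' h2' x d))).trans ?_).trans
          (a1 A γ h2' _ _).symm)
      refine not_congr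
        (quant_aux (jlam Γ A) H H2 W (fun a b => ¬ γ.Sat A (jval a b)) ?_ ?_ x z)
      · intro a b a' b' h
        exact not_congr (jlam_sat h γ (hs' (self_mem_jsub _)) 0 1)
      · intro a a' h
        rw [← not_iff_not, ← a1 _ _ h2' a a, ← a1 _ _ h2' a' a']
        exact jlam_sat h _ hm 0 0

/-- Gluing relation of a bisimulation. -/
def jrel {A : Bool → Type} (S : Set (A false × A true)) (x y : Σ i, A i) : Prop :=
  ∃ p ∈ S, x = ⟨false, p.1⟩ ∧ y = ⟨true, p.2⟩

theorem jcls {σ : Sig} {τ : Set σ.Rel} (A : Bool → Str σ)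
    (S : Set ((A false).dom × (A true).dom)) (hS : FO2Bisim τ (A false) (A true) S)
    (x y : Σ i, (A i).dom)
    (h : Relation.EqvGen (jrel (A := fun i => (A i).dom) S) x y) :
    (∀ x', ∃ y', Relation.EqvGen (jrel (A := fun i => (A i).dom) S) ⟨x.1, x'⟩ ⟨y.1, y'⟩ ∧
      jrho τ (A x.1) x.2 x' = jrho τ (A y.1) y.2 y') ∧
    (∀ y', ∃ x', Relation.EqvGen (jrel (A := fun i => (A i).dom) S) ⟨x.1, x'⟩ ⟨y.1, y'⟩ ∧
      jrho τ (A x.1) x.2 x' = jrho τ (A y.1) y.2 y') := by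
  induction h with
  | rel x y h =>
    obtain ⟨p, hp, rfl, rfl⟩ := h
    constructor
    · intro x'
      obtain ⟨y', h1, h2⟩ := (hS.2.2 p hp).1 x'
      exact ⟨y', .rel _ _ ⟨_, h2, rfl, rfl⟩, jrho_piso.2 h1⟩
    · intro y'
      obtain ⟨x', h1, h2⟩ := (hS.2.2 p hp).2 y'
      exact ⟨x', .rel _ _ ⟨_, h2, rfl, rfl⟩, jrho_piso.2 h1⟩
  | refl x => exact ⟨fun x' => ⟨x', .refl _, rfl⟩, fun x' => ⟨x', .refl _, rfl⟩⟩
  | symm x y _ ih =>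
    constructor
    · intro x'
      obtain ⟨y', h1, h2⟩ := ih.2 x'
      exact ⟨y', .symm _ _ h1, h2.symm⟩
    · intro x'
      obtain ⟨y', h1, h2⟩ := ih.1 x'
      exact ⟨y', .symm _ _ h1, h2.symm⟩
  | trans x y z _ _ ih1 ih2 =>
    constructor
    · intro x'
      obtain ⟨y', h1, h2⟩ := ih1.1 x'
      obtain ⟨z', h3, h4⟩ := ih2.1 y'
      exact ⟨z', .trans _ _ _ h1 h3, h2.trans h4⟩
    · intro x'
      obtain ⟨y', h1, h2⟩ := ih2.2 x'
      obtain ⟨z', h3, h4⟩ := ih1.2 y'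
      exact ⟨z', .trans _ _ _ h3 h1, h4.trans h2⟩

open Classical in
theorem jcore {σ : Sig} {τ : Set σ.Rel} (Γ : Finset (Fml σ)) (A : Bool → Str σ)
    (hA : ∀ i R s, (A i).interp R s → JRlv Γ R s)
    (S : Set ((A false).dom × (A true).dom)) (hS : FO2Bisim τ (A false) (A true) S)
    (a0 a1 : ∀ i, (A i).dom) (ha0 : (a0 false, a0 true) ∈ S) (ha1 : (a1 false, a1 true) ∈ S) :
    ∃ (B : Bool → Str σ) (b0 b1 : ∀ i, (B i).dom),
      (∀ i, Finite (B i).dom) ∧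
      (∀ i, Nat.card (B i).dom ≤ 2 ^ (80 * 2 ^ (4 * Γ.card + 1))) ∧
      (∀ i γ, jsub γ ⊆ Γ → IsFO2 γ →
        (γ.Sat (B i) (jval (b0 i) (b1 i)) ↔ γ.Sat (A i) (jval (a0 i) (a1 i)))) ∧
      (∀ i, jrho τ (B i) (b0 i) (b1 i) = jrho τ (A i) (a0 i) (a1 i)) ∧
      ∃ S', FO2Bisim τ (B false) (B true) S' ∧ (b0 false, b0 true) ∈ S' ∧
        (b1 false, b1 true) ∈ S' := by
  let r := jrel (A := fun i => (A i).dom) S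
  let cls : ∀ i, (A i).dom → Quot r := fun i a => Quot.mk r ⟨i, a⟩
  have hq : ∀ a : ∀ i, (A i).dom, (a false, a true) ∈ S → ∀ i, cls i (a i) = cls false (a false) := by
    intro a ha i
    cases i
    · rfl
    · exact (Quot.sound ⟨_, ha, rfl, rfl⟩).symm
  obtain ⟨X, iX, Y, node, H, b0, b1, x1, x2, x3, x4, x5, x6, x7⟩ :=
    absMain (A := fun i => (A i).dom) (fun i => jlam Γ (A i)) (fun i => jrho τ (A i)) cls
      (fun i a b a' b' h => jlam_diag h)
      (fun i a b a' b' h => by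
        refine Prod.ext ?_ ?_
        · exact propext (jlam_eq h)
        · funext R t
          exact propext (jlam_interp (hA i) (hA i) h R.1 t))
      (fun i j a b h a' => by
        obtain ⟨y', h1, h2⟩ := (jcls A S hS ⟨i, a⟩ ⟨j, b⟩ (Quot.eqvGen_exact h)).1 a'
        exact ⟨y', (Quot.eqvGen_sound h1).symm, h2⟩)
      a0 a1 _ _ (hq a0 ha0) (hq a1 ha1)
  have hrho : ∀ i p q, jrho τ (jglue (A i) (H i)) p q = jrho τ (A i) (H i p q) (H i q p) := by
    intro i p q
    refine Prod.ext ?_ ?_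
    · exact propext (x2 i p q).symm
    · funext R t
      exact propext (jglue_interp (A i) (hA i) (H i) (x3 i) R.1 p q t)
  refine ⟨fun i => jglue (A i) (H i), b0, b1, fun i => ?_, fun i => ?_, ?_, ?_, ?_⟩
  · exact (inferInstance : Finite (X i))
  · have := x1 i
    rw [← Nat.card_eq_fintype_card] at this
    refine this.trans (le_of_eq ?_)
    congr 2
    simp only [Fintype.card_prod, Fintype.card_fun, Fintype.card_prop, Fintype.card_fin,
      Fintype.card_coe]
    rw [← pow_mul, ← pow_mul, pow_succ]
    congr 2
    ring
  · intro i γ h1 h2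
    have := jglue_sat (A i) (hA i) (H i) (x2 i) (x3 i) (x4 i) γ h1 h2 (b0 i) (b1 i)
    rw [(x6 i).1, (x6 i).2] at this
    exact this
  · intro i
    exact (hrho i (b0 i) (b1 i)).trans (by rw [(x6 i).1, (x6 i).2])
  · refine ⟨{p | node false p.1 = node true p.2}, ⟨?_, ?_, ?_⟩, (x7 _ _).1, (x7 _ _).2⟩
    · intro a
      obtain ⟨b, hb, -⟩ := x5 false true (b0 false) (b0 true) (x7 _ _).1 a
      exact ⟨b, hb.symm⟩
    · intro a
      obtain ⟨b, hb, -⟩ := x5 true false (b0 true) (b0 false) (x7 _ _).1 a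
      exact ⟨b, hb⟩
    · rintro ⟨a, b⟩ hab
      constructor
      · intro a'
        obtain ⟨b', hb, h⟩ := x5 false true a b hab a'
        refine ⟨b', jrho_piso.1 ?_, hb.symm⟩
        exact (hrho false a a').trans (h.trans (hrho true b b').symm)
      · intro b'
        obtain ⟨a', ha, h⟩ := x5 true false b a hab.symm b'
        refine ⟨a', jrho_piso.1 ?_, ha⟩
        exact (hrho false a a').trans (h.symm.trans (hrho true b b').symm)

theorem piso_comp {σ : Sig} {τ : Set σ.Rel} {A B : Str σ} {n m : ℕ} {u : Fin n → A.dom}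
    {u' : Fin n → B.dom} (h : PartialIso τ A B u u') (e : Fin m → Fin n) :
    PartialIso τ A B (u ∘ e) (u' ∘ e) :=
  ⟨fun i j => h.1 (e i) (e j), fun R hR t => h.2 R hR (e ∘ t)⟩

theorem pick_pair {σ : Sig} {τ : Set σ.Rel} {A B : Str σ} {n : ℕ} (hn : n ≤ 2)
    (a : Fin n → A.dom) (b : Fin n → B.dom) (hp : PartialIso τ A B a b)
    (S : Set (A.dom × B.dom)) (hS : FO2Bisim τ A B S) (hab : ∀ i, (a i, b i) ∈ S)
    (hne : Nonempty A.dom) :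
    ∃ a0 a1 b0 b1, (a0, b0) ∈ S ∧ (a1, b1) ∈ S ∧ PartialIso τ A B ![a0, a1] ![b0, b1] ∧
      (∀ i : Fin n, jval a0 a1 i = a i) ∧ (∀ i : Fin n, jval b0 b1 i = b i) := by
  have ext1 : ∀ a0 b0, (a0, b0) ∈ S → ∃ b1, (a0, b1) ∈ S ∧
      PartialIso τ A B ![a0, a0] ![b0, b1] := by
    intro a0 b0 h
    obtain ⟨b1, h1, h2⟩ := (hS.2.2 _ h).1 a0
    exact ⟨b1, h2, h1⟩
  obtain rfl | rfl | rfl : n = 0 ∨ n = 1 ∨ n = 2 := by omega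
  · obtain ⟨a0⟩ := hne
    obtain ⟨b0, h0⟩ := hS.1 a0
    obtain ⟨b1, h1, h2⟩ := ext1 a0 b0 h0
    exact ⟨a0, a0, b0, b1, h0, h1, h2, fun i => i.elim0, fun i => i.elim0⟩
  · obtain ⟨b1, h1, h2⟩ := ext1 (a 0) (b 0) (hab 0)
    refine ⟨a 0, a 0, b 0, b1, hab 0, h1, h2, fun i => ?_, fun i => ?_⟩ <;>
    · have : i = 0 := Subsingleton.elim _ _
      subst this
      rfl
  · refine ⟨a 0, a 1, b 0, b 1, hab 0, hab 1, ?_, fun i => ?_, fun i => ?_⟩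
    · have e1 : ![a 0, a 1] = a := by funext i; fin_cases i <;> rfl
      have e2 : ![b 0, b 1] = b := by funext i; fin_cases i <;> rfl
      rw [e1, e2]
      exact hp
    · fin_cases i <;> rfl
    · fin_cases i <;> rfl

/-- If two-variable formulas `φ(x₀)` and `ψ(x₀)` are jointly
FO²(τ)-consistent, then there are FO²(τ)-bisimilar pointed models of `φ` and
`ψ` whose domains have size at most double exponential (`2^(2^(p(s)))` for a
fixed polynomial `p`) in the combined size `s` of `φ` and `ψ`. -/
theorem fo2_joint_consistency_double_exponential_models :
    ∃ p : Polynomial ℕ,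
      ∀ (σ : Sig) (τ : Set σ.Rel) (n : ℕ) (φ ψ : Fml σ), n ≤ 2 →
        IsFO2 φ → IsFO2 ψ →
        φ.fv ⊆ Finset.range n → ψ.fv ⊆ Finset.range n →
        JointFO2Con τ n φ ψ →
        ∃ (B₁ B₂ : Str σ) (b₁ : Fin n → B₁.dom) (b₂ : Fin n → B₂.dom),
          Finite B₁.dom ∧ Finite B₂.dom ∧
          Nat.card B₁.dom ≤ 2 ^ 2 ^ (p.eval (φ.size + ψ.size)) ∧
          Nat.card B₂.dom ≤ 2 ^ 2 ^ (p.eval (φ.size + ψ.size)) ∧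
          SatTupleF B₁ φ b₁ ∧ SatTupleF B₂ ψ b₂ ∧
          FO2Bisimilar τ B₁ B₂ b₁ b₂ := by
  classical
  refine ⟨4 * Polynomial.X + 8, ?_⟩
  intro σ τ n φ ψ hn hφ hψ fφ fψ ⟨A, B, a, b, sφ, sψ, hp, S, hS, hab⟩
  by_cases hne : Nonempty A.dom
  swap
  · have hA : IsEmpty A.dom := not_nonempty_iff.1 hne
    have hB : IsEmpty B.dom := ⟨fun y => by
      obtain ⟨x, -⟩ := hS.2.1 y
      exact hA.elim x⟩
    refine ⟨A, B, a, b, inferInstance, inferInstance, ?_, ?_, sφ, sψ, hp, S, hS, hab⟩ <;> simp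
  obtain ⟨a0, a1, b0, b1, h0, h1, h2, ea, eb⟩ := pick_pair hn a b hp S hS hab hne
  let Γ := jsub φ ∪ jsub ψ
  let AA : Bool → Str σ := fun i => match i with
    | false => jhat Γ A
    | true => jhat Γ B
  have hS' : FO2Bisim τ (AA false) (AA true) S := by
    refine ⟨hS.1, hS.2.1, fun p hp => ⟨fun a' => ?_, fun b' => ?_⟩⟩
    · obtain ⟨b', h1, h2⟩ := (hS.2.2 p hp).1 a'
      exact ⟨b', hat_piso Γ τ A B _ _ h1, h2⟩
    · obtain ⟨a', h1, h2⟩ := (hS.2.2 p hp).2 b'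
      exact ⟨a', hat_piso Γ τ A B _ _ h1, h2⟩
  obtain ⟨C, c0, c1, k1, k2, k3, k4, S', k5, k6, k7⟩ := jcore (τ := τ) Γ AA
    (fun i => match i with
      | false => fun R s h => h.2
      | true => fun R s h => h.2) S hS'
    (fun i => match i with
      | false => a0
      | true => b0)
    (fun i => match i with
      | false => a1
      | true => b1) h0 h1
  have hcard : 2 ^ (80 * 2 ^ (4 * Γ.card + 1)) ≤
      2 ^ 2 ^ ((4 * Polynomial.X + 8 : Polynomial ℕ).eval (φ.size + ψ.size)) := by
    have e : (4 * Polynomial.X + 8 : Polynomial ℕ).eval (φ.size + ψ.size) =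
        4 * (φ.size + ψ.size) + 8 := by simp
    rw [e]
    have hΓ : Γ.card ≤ φ.size + ψ.size :=
      (Finset.card_union_le _ _).trans (add_le_add (card_jsub φ) (card_jsub ψ))
    apply Nat.pow_le_pow_right (by norm_num)
    calc 80 * 2 ^ (4 * Γ.card + 1) ≤ 2 ^ 7 * 2 ^ (4 * Γ.card + 1) := by
          apply Nat.mul_le_mul_right; norm_num
      _ = 2 ^ (4 * Γ.card + 8) := by rw [← pow_add]; congr 1; ring
      _ ≤ _ := Nat.pow_le_pow_right (by norm_num) (by omega)
  have hP : PartialIso τ (C false) (C true) ![c0 false, c1 false] ![c0 true, c1 true] :=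
    jrho_piso.1 ((k4 false).trans
      ((jrho_piso.2 (hat_piso Γ τ A B _ _ h2)).trans (k4 true).symm))
  have hsat : ∀ (D : Str σ) (γ : Fml σ) (x y : D.dom), γ.fv ⊆ Finset.range n →
      γ.Sat D (jval x y) → SatTupleF D γ (![x, y] ∘ Fin.castLE hn) := by
    intro D γ x y hγ hs v hv
    refine (sat_congr_fv D γ _ _ fun m hm => ?_).1 hs
    have hmn := Finset.mem_range.1 (hγ hm)
    have := hv ⟨m, hmn⟩
    have hm2 : m = 0 ∨ m = 1 := by omega
    rcases hm2 with rfl | rfl <;> exact this.symm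
  refine ⟨C false, C true, ![c0 false, c1 false] ∘ Fin.castLE hn,
    ![c0 true, c1 true] ∘ Fin.castLE hn, k1 _, k1 _, (k2 _).trans hcard, (k2 _).trans hcard,
    ?_, ?_, piso_comp hP _, S', k5, ?_⟩
  · apply hsat _ _ _ _ fφ
    rw [k3 false φ Finset.subset_union_left hφ]
    exact (hat_sat Γ A φ Finset.subset_union_left hφ _).2 (sφ _ ea)
  · apply hsat _ _ _ _ fψ
    rw [k3 true ψ Finset.subset_union_right hψ]
    exact (hat_sat Γ B ψ Finset.subset_union_right hψ _).2 (sψ _ eb)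
  · intro i
    rcases fin2_cases (Fin.castLE hn i) with e | e <;> simp only [Function.comp, e]
    · exact k6
    · exact k7
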